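/- Let p > 1, μ = 1 or μ = −1, and let u ∈ C²([0,T]; ℓ²(ℤ^d)) satisfy the discrete semilinear wave equation ∂_t² u(x,t) − Δu(x,t) = μ|u(x,t)|^{p−1}u(x,t) for all (x,t) ∈ ℤ^d × [0,T]. Then the energy E(t) := (1/2) Σ_{k∈ℤ^d} ( |∂_t u(k,t)|² + Σ_{j=1}^d |∂_j u(k,t)|² − 2μ|u(k,t)|^{p+1}/(p+1) ) is conserved: E(t) = E(0) for all t ∈ [0,T]. -/

import Mathlib

/-!
The energy is rewritten through the Hilbert space `ℓ²(ℤ^d)`, where it can be differentiated.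

*Gradient term.* The kernel of `∂ⱼ` is `-i ψ(a)` on the line `ℤ eⱼ`, with
`ψ(a) = 4/(π(4a²-1)) = (2/π)(g(a-1) - g(a))` and `g(b) = 1/(2b+1)`. The sequence `g` is orthogonal
to its nonzero translates: for `c ≠ 0`, `g(b) g(b+c) = (g(b) - g(b+c))/(2c)` telescopes to `0`,
while `∑ g² = π²/4`. Hence the autocorrelation of `ψ` is `2δ₀ - δ₁ - δ₋₁` (`hasSum_psi_mul`), and
`∑ₖ |∂ⱼu(k)|² = ‖τ_{eⱼ}u - u‖²` with `τ` the translation (`hasSum_pd_sq`). Summation by parts gives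
`∑ⱼ ⟪τ_{eⱼ}u - u, τ_{eⱼ}v - v⟫ = -⟪Δu, v⟫` (`sum_inner_diff`).

*Potential.* The function `z ↦ |z|^{p+1}` is convex with gradient `(p+1)|z|^{p-1}z`, which is
locally Lipschitz, so its first order Taylor remainder is `O(|w|²)` on bounded sets
(`nl_remainder`). Summing over the lattice, `∑ |u|^{p+1}` is differentiable along a differentiable
curve in `ℓ²` (`potential_hasDeriv`).

The derivative of the energy is then `Re ⟪∂ₜ²u - Δu - μ|u|^{p-1}u, ∂ₜu⟫ = 0`.
-/

open scoped BigOperators ENNReal NNReal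
open MeasureTheory Filter

noncomputable section

/-- Kernel `φⱼ` of the discrete partial derivative on `ℤ^d`:
`φⱼ(m) = -4i/(π(4a²-1))` if `m = a·eⱼ`, and `0` otherwise. -/
def phi (d : ℕ) (j : Fin d) (m : Fin d → ℤ) : ℂ :=
  if ∀ i, i ≠ j → m i = 0 then
    (-4 * Complex.I) / ((Real.pi : ℂ) * (4 * (m j : ℂ) ^ 2 - 1))
  else 0

/-- Discrete convolution on `ℤ^d`. -/
def dconv {d : ℕ} (u v : (Fin d → ℤ) → ℂ) (k : Fin d → ℤ) : ℂ :=
  ∑' m, u m * v (k - m)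

/-- Discrete partial derivative `∂ⱼ u = u ∗ φⱼ`. -/
def pd {d : ℕ} (j : Fin d) (u : (Fin d → ℤ) → ℂ) : (Fin d → ℤ) → ℂ :=
  dconv u (phi d j)

/-- Japanese bracket `⟨m⟩ = (1+|m|²)^{1/2}`. -/
def jap {d : ℕ} (m : Fin d → ℤ) : ℝ :=
  Real.sqrt (1 + ∑ i, ((m i : ℝ)) ^ 2)

open scoped Classical in
/-- `ℓ^p` norm on `ℤ^d` (valued in `ℝ≥0∞`), `1 ≤ p ≤ ∞`. -/
def lpn {d : ℕ} (p : ℝ≥0∞) (f : (Fin d → ℤ) → ℂ) : ℝ≥0∞ :=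
  if p = ⊤ then ⨆ m, (‖f m‖₊ : ℝ≥0∞)
  else (∑' m, (‖f m‖₊ : ℝ≥0∞) ^ p.toReal) ^ (1 / p.toReal)

/-- Weighted `ℓ^{2,k}` norm: the `ℓ²` norm of `m ↦ ⟨m⟩^k f(m)`. -/
def w2 {d : ℕ} (k : ℕ) (f : (Fin d → ℤ) → ℂ) : ℝ≥0∞ :=
  lpn 2 (fun m => ((jap m ^ k : ℝ) : ℂ) * f m)

/-- Discrete Laplacian on `ℤ^d`. -/
def lap {d : ℕ} (u : (Fin d → ℤ) → ℂ) (x : Fin d → ℤ) : ℂ :=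
  ∑ j, (u (x + Pi.single j 1) + u (x - Pi.single j 1) - 2 * u x)

/-- Continuity of a curve `t ↦ f(·,t)` into `ℓ^{2,k}(ℤ^d)` on a set `S` of times. -/
def ContW {d : ℕ} (k : ℕ) (S : Set ℝ) (f : ℝ → (Fin d → ℤ) → ℂ) : Prop :=
  ∀ t ∈ S, Tendsto (fun s => w2 k (fun m => f s m - f t m))
    (nhdsWithin t S) (nhds (0 : ℝ≥0∞))

/-- `f'` is the derivative (in the `ℓ^{2,k}(ℤ^d)` norm) of the curve `t ↦ f(·,t)` on `S`. -/
def DerivW {d : ℕ} (k : ℕ) (S : Set ℝ) (f f' : ℝ → (Fin d → ℤ) → ℂ) : Prop :=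
  ∀ t ∈ S, Tendsto
    (fun s => w2 k (fun m => (s - t)⁻¹ • (f s m - f t m) - f' t m))
    (nhdsWithin t (S \ {t})) (nhds (0 : ℝ≥0∞))

/-- `u ∈ C²(S; ℓ^{2,k}(ℤ^d))`, with first and second time derivatives `u1`, `u2`. -/
structure IsC2 {d : ℕ} (k : ℕ) (S : Set ℝ) (u u1 u2 : ℝ → (Fin d → ℤ) → ℂ) : Prop where
  mem0 : ∀ t ∈ S, w2 k (u t) < ⊤
  mem1 : ∀ t ∈ S, w2 k (u1 t) < ⊤
  mem2 : ∀ t ∈ S, w2 k (u2 t) < ⊤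
  cont0 : ContW k S u
  cont1 : ContW k S u1
  cont2 : ContW k S u2
  hder1 : DerivW k S u u1
  hder2 : DerivW k S u1 u2

/-! ### The autocorrelation of the derivative kernel -/

/-- The sequence `g(b) = 1/(2b+1)`, `b ∈ ℤ`. -/
def oddInv (b : ℤ) : ℝ := 1 / (2 * (b : ℝ) + 1)

lemma two_mul_add_one_ne (b : ℤ) : (2 * (b : ℝ) + 1) ≠ 0 := by
  have h : 2 * b + 1 ≠ 0 := by omega
  exact_mod_cast h

lemma hasSum_oddInv_sq : HasSum (fun b : ℤ => oddInv b ^ 2) (Real.pi ^ 2 / 4) := by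
  have hz := hasSum_zeta_two
  have hev : HasSum (fun n : ℕ => (1 : ℝ) / ((2 * n : ℕ) : ℝ) ^ 2) (Real.pi ^ 2 / 24) := by
    convert! hz.mul_left (1 / 4) using 1
    · ext n; push_cast; rw [mul_pow]; ring
    · ring
  have hods : Summable (fun n : ℕ => (1 : ℝ) / ((2 * n + 1 : ℕ) : ℝ) ^ 2) :=
    hz.summable.comp_injective (i := fun n : ℕ => 2 * n + 1) (fun a b h => by simpa using h)
  have hod : HasSum (fun n : ℕ => (1 : ℝ) / ((2 * n + 1 : ℕ) : ℝ) ^ 2) (Real.pi ^ 2 / 8) := by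
    have h := hev.even_add_odd (f := fun n : ℕ => (1 : ℝ) / (n : ℝ) ^ 2) hods.hasSum
    have h2 := h.unique hz
    have h3 : ∑' n : ℕ, (1 : ℝ) / ((2 * n + 1 : ℕ) : ℝ) ^ 2 = Real.pi ^ 2 / 8 := by linarith
    exact h3 ▸ hods.hasSum
  have h := HasSum.of_nat_of_neg_add_one (f := fun b : ℤ => oddInv b ^ 2)
    (m := Real.pi ^ 2 / 8) (m' := Real.pi ^ 2 / 8) ?_ ?_
  · convert! h using 1; ring
  · convert! hod using 2 with n
    simp [oddInv]
  · convert! hod using 2 with n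
    simp only [oddInv]; push_cast
    rw [div_pow, show (2 * (-((n : ℝ) + 1)) + 1) = -(2 * n + 1) by ring, neg_sq]; simp

lemma summable_oddInv_mul (c : ℤ) : Summable (fun b : ℤ => oddInv b * oddInv (b + c)) := by
  have h1 := hasSum_oddInv_sq.summable
  have h2 : Summable (fun b : ℤ => oddInv (b + c) ^ 2) :=
    (Equiv.addRight c).summable_iff (f := fun b : ℤ => oddInv b ^ 2) |>.2 h1
  refine Summable.of_norm_bounded (h1.add h2) fun b => ?_
  rw [Real.norm_eq_abs, abs_le]
  constructor <;> nlinarith [sq_nonneg (oddInv b + oddInv (b + c)),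
    sq_nonneg (oddInv b - oddInv (b + c)), sq_nonneg (oddInv b), sq_nonneg (oddInv (b + c))]

lemma oddInv_mul (b c : ℤ) :
    oddInv b - oddInv (b + c) = 2 * c * (oddInv b * oddInv (b + c)) := by
  have h1 := two_mul_add_one_ne b
  have h2 := two_mul_add_one_ne (b + c)
  simp only [oddInv]
  field_simp
  push_cast
  ring

lemma tendsto_oddInv : Tendsto (fun n : ℕ => oddInv n) atTop (nhds 0) := by
  have : Summable (fun n : ℕ => oddInv n ^ 2) :=
    hasSum_oddInv_sq.summable.comp_injective (i := fun n : ℕ => (n : ℤ)) Nat.cast_injective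
  have h := this.tendsto_atTop_zero.sqrt
  simp only [Real.sqrt_sq_eq_abs, Real.sqrt_zero] at h
  exact (tendsto_zero_iff_abs_tendsto_zero _).2 h

lemma tendsto_oddInv_neg : Tendsto (fun n : ℕ => oddInv (-n)) atTop (nhds 0) := by
  have : Summable (fun n : ℕ => oddInv (-n) ^ 2) :=
    hasSum_oddInv_sq.summable.comp_injective (i := fun n : ℕ => (-n : ℤ)) (fun a b h => by simpa using h)
  have h := this.tendsto_atTop_zero.sqrt
  simp only [Real.sqrt_sq_eq_abs, Real.sqrt_zero] at h
  exact (tendsto_zero_iff_abs_tendsto_zero _).2 h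

lemma hasSum_oddInv_sub_one : HasSum (fun b : ℤ => oddInv b - oddInv (b + 1)) 0 := by
  have hs : Summable (fun b : ℤ => oddInv b - oddInv (b + 1)) := by
    simp only [oddInv_mul]
    exact (summable_oddInv_mul 1).mul_left _
  have h1 := hs.hasSum.comp (Finset.tendsto_Ico_neg (R := ℤ))
  have h2 : ∀ n : ℕ, ∑ b ∈ Finset.Ico (-n : ℤ) n, (oddInv b - oddInv (b + 1))
      = oddInv (-n) - oddInv n := by
    intro n
    induction n with
    | zero => simp
    | succ n ih =>
      have e : Finset.Ico (-(n + 1 : ℕ) : ℤ) (n + 1 : ℕ)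
          = insert (-(n + 1 : ℤ)) (insert (n : ℤ) (Finset.Ico (-n : ℤ) n)) := by
        ext x; simp only [Finset.mem_Ico, Finset.mem_insert]; push_cast; omega
      rw [e, Finset.sum_insert (by simp), Finset.sum_insert (by simp), ih]
      push_cast
      rw [show (-((n : ℤ) + 1) + 1) = -n by ring]
      ring
  have h3 : Tendsto (fun n : ℕ => oddInv (-n) - oddInv n) atTop (nhds 0) := by
    simpa using tendsto_oddInv_neg.sub tendsto_oddInv
  have h4 := tendsto_nhds_unique h1 (h3.congr fun n => (h2 n).symm)
  exact h4 ▸ hs.hasSum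

lemma hasSum_oddInv_sub_nat (c : ℕ) : HasSum (fun b : ℤ => oddInv b - oddInv (b + c)) 0 := by
  induction c with
  | zero => simp
  | succ n ih =>
    have h := ((Equiv.addRight (n : ℤ)).hasSum_iff
      (f := fun b : ℤ => oddInv b - oddInv (b + 1))).2 hasSum_oddInv_sub_one
    convert! ih.add h using 1
    · ext b; simp [add_assoc]
    · simp

lemma hasSum_oddInv_sub (c : ℤ) : HasSum (fun b : ℤ => oddInv b - oddInv (b + c)) 0 := by
  obtain ⟨n, rfl | rfl⟩ := c.eq_nat_or_neg
  · exact hasSum_oddInv_sub_nat n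
  · have h := ((Equiv.addRight (-n : ℤ)).hasSum_iff
      (f := fun b : ℤ => oddInv b - oddInv (b + n))).2 (hasSum_oddInv_sub_nat n)
    convert! h.neg using 1
    · ext b; simp
    · simp

/-- `g` is orthogonal in `ℓ²(ℤ)` to its nonzero translates. -/
lemma hasSum_oddInv_mul (c : ℤ) : HasSum (fun b : ℤ => oddInv b * oddInv (b + c))
    (if c = 0 then Real.pi ^ 2 / 4 else 0) := by
  split_ifs with hc
  · subst hc; simpa [sq] using hasSum_oddInv_sq
  · have hc' : (c : ℝ) ≠ 0 := by exact_mod_cast hc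
    convert! (hasSum_oddInv_sub c).mul_left (1 / (2 * (c : ℝ))) using 1
    · ext b; rw [oddInv_mul]; field_simp
    · simp

/-- The real profile `ψ(a) = 4/(π(4a²-1))` of the derivative kernel: `φⱼ(a eⱼ) = -i ψ(a)`. -/
def psi (a : ℤ) : ℝ := 4 / (Real.pi * (4 * (a : ℝ) ^ 2 - 1))

lemma psi_eq (a : ℤ) : psi a = (2 / Real.pi) * (oddInv (a - 1) - oddInv a) := by
  have h1 := two_mul_add_one_ne (a - 1)
  have h2 := two_mul_add_one_ne a
  have h3 : (4 * (a : ℝ) ^ 2 - 1) = (2 * ((a - 1 : ℤ) : ℝ) + 1) * (2 * (a : ℝ) + 1) := by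
    push_cast; ring
  have := Real.pi_ne_zero
  simp only [psi, oddInv, h3]
  field_simp
  push_cast
  ring

lemma summable_psi : Summable psi := by
  have h := ((Equiv.addRight (-1 : ℤ)).hasSum_iff
      (f := fun b : ℤ => oddInv b - oddInv (b + 1))).2 hasSum_oddInv_sub_one
  refine (h.summable.mul_left (2 / Real.pi)).congr fun a => ?_
  rw [psi_eq]; simp [sub_eq_add_neg]

/-- The autocorrelation of `ψ` is the kernel `2δ₀ - δ₁ - δ₋₁` of `-Δ` on `ℤ`. -/
lemma hasSum_psi_mul (c : ℤ) : HasSum (fun b : ℤ => psi b * psi (b + c))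
    ((if c = 0 then 2 else 0) - (if c = 1 then 1 else 0) - (if c = -1 then 1 else 0)) := by
  have hA := hasSum_oddInv_mul c
  have hsh : ∀ e : ℤ, HasSum (fun b : ℤ => oddInv (b - 1) * oddInv (b - 1 + e))
      (if e = 0 then Real.pi ^ 2 / 4 else 0) := fun e =>
    ((Equiv.subRight (1 : ℤ)).hasSum_iff
      (f := fun b : ℤ => oddInv b * oddInv (b + e))).2 (hasSum_oddInv_mul e)
  have h := ((((hsh c).sub (hsh (c + 1))).sub (hasSum_oddInv_mul (c - 1))).add hA).mul_left
    ((2 / Real.pi) ^ 2)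
  convert! h using 1
  · ext b
    rw [psi_eq, psi_eq, show b - 1 + c = b + c - 1 by ring, show b - 1 + (c + 1) = b + c by ring,
      show b + (c - 1) = b + c - 1 by ring]
    ring
  · have hpi := Real.pi_ne_zero
    have e1 : (c + 1 = 0) ↔ c = -1 := by omega
    have e2 : (c - 1 = 0) ↔ c = 1 := by omega
    simp only [e1, e2]
    by_cases h0 : c = 0
    · subst h0; simp; field_simp; norm_num
    · by_cases h1 : c = 1
      · subst h1; simp; field_simp; norm_num
      · by_cases h2 : c = -1
        · subst h2; simp; field_simp; norm_num
        · simp [h0, h1, h2]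

/-- For a stationary sequence `v` (Gram matrix depending on `b - a` only), the sum `∑ ψ(a) v(a)` has
the same norm as the increment `v 1 - v 0`: both squares equal `2κ(0) - κ(1) - κ(-1)`. -/
lemma norm_tsum_psi_smul_sq {E : Type*} [NormedAddCommGroup E] [InnerProductSpace ℂ E]
    [CompleteSpace E] (v : ℤ → E) (κ : ℤ → ℂ) (hv : ∀ a b, inner ℂ (v a) (v b) = κ (b - a)) :
    Summable (fun a => (psi a : ℂ) • v a) ∧
    ‖∑' a, (psi a : ℂ) • v a‖ ^ 2 = ‖v 1 - v 0‖ ^ 2 := by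
  have hnorm : ∀ a, ‖v a‖ = ‖v 0‖ := by
    intro a
    have h : ‖v a‖ ^ 2 = ‖v 0‖ ^ 2 := by
      rw [← inner_self_eq_norm_sq (𝕜 := ℂ), ← inner_self_eq_norm_sq (𝕜 := ℂ), hv, hv]; simp
    exact (sq_eq_sq₀ (norm_nonneg _) (norm_nonneg _)).1 h
  have hκ : ∀ c, ‖κ c‖ ≤ ‖v 0‖ ^ 2 := by
    intro c
    have h := norm_inner_le_norm (𝕜 := ℂ) (v 0) (v c)
    rw [hv, hnorm c, sub_zero] at h
    rwa [sq]
  have hsum : Summable (fun a => (psi a : ℂ) • v a) := by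
    refine Summable.of_norm ?_
    simp only [norm_smul, hnorm, Complex.norm_real]
    exact summable_psi.norm.mul_right _
  refine ⟨hsum, ?_⟩
  set w := ∑' a, (psi a : ℂ) • v a with hw
  have h1 : ∀ x, HasSum (fun a => (psi a : ℂ) * inner ℂ x (v a)) (inner ℂ x w) := fun x => by
    have h := hsum.hasSum.mapL (innerSL ℂ x)
    simp only [innerSL_apply_apply, inner_smul_right] at h
    exact h
  have h2 : HasSum (fun a => (psi a : ℂ) * inner ℂ (v a) w) (inner ℂ w w) := by
    have h := (h1 w).mapL (Complex.conjCLE : ℂ →L[ℝ] ℂ)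
    simpa using h
  -- Expand `⟪w, w⟫` as a double series indexed by `a` and the difference `c = b - a`, and exchange
  -- the order of summation; the sum over `a` is then an autocorrelation of `ψ`.
  have h3 : ∀ a, HasSum (fun c => (psi a : ℂ) * ((psi (a + c) : ℂ) * κ c))
      ((psi a : ℂ) * inner ℂ (v a) w) := fun a => by
    have h := ((Equiv.addLeft a).hasSum_iff).2 (h1 (v a))
    refine HasSum.mul_left _ ?_
    simpa [Function.comp_def, hv] using h
  have hS : Summable (fun x : ℤ × ℤ => (psi x.1 : ℂ) * ((psi (x.1 + x.2) : ℂ) * κ x.2)) := by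
    have hm : Summable (fun x : ℤ × ℤ => |psi x.1| * |psi x.2|) :=
      summable_psi.abs.mul_of_nonneg summable_psi.abs (fun _ => abs_nonneg _) (fun _ => abs_nonneg _)
    have hm2 := ((Equiv.prodShear (Equiv.refl ℤ) (fun a : ℤ => Equiv.addLeft a)).summable_iff).2 hm
    refine Summable.of_norm_bounded (hm2.mul_right (‖v 0‖ ^ 2)) fun x => ?_
    simp only [norm_mul, Complex.norm_real, Function.comp_def, Equiv.prodShear_apply,
      Equiv.refl_apply, Equiv.coe_addLeft, Real.norm_eq_abs]
    rw [← mul_assoc]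
    exact mul_le_mul_of_nonneg_left (hκ _) (by positivity)
  have h4 : HasSum (fun x : ℤ × ℤ => (psi x.1 : ℂ) * ((psi (x.1 + x.2) : ℂ) * κ x.2))
      (inner ℂ w w) := by
    have h := hS.hasSum.prod_fiberwise h3
    rw [← h.unique h2]; exact hS.hasSum
  have h5 : ∀ c, HasSum (fun a => (psi a : ℂ) * ((psi (a + c) : ℂ) * κ c))
      ((((if c = 0 then 2 else 0) - (if c = 1 then 1 else 0)
        - (if c = -1 then 1 else 0) : ℝ) : ℂ) * κ c) := fun c => by
    have h := Complex.hasSum_ofReal.2 (hasSum_psi_mul c)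
    simpa [mul_assoc] using h.mul_right (κ c)
  have h6 := ((Equiv.prodComm ℤ ℤ).hasSum_iff.2 h4).prod_fiberwise h5
  have h7 := hasSum_sum_of_ne_finset_zero (L := SummationFilter.unconditional ℤ) (s := ({0, 1, -1} : Finset ℤ)) (f := fun c : ℤ =>
    ((((if c = 0 then 2 else 0) - (if c = 1 then 1 else 0)
        - (if c = -1 then 1 else 0) : ℝ) : ℂ) * κ c)) (by
      intro c hc
      simp only [Finset.mem_insert, Finset.mem_singleton, not_or] at hc
      simp [hc.1, hc.2.1, hc.2.2])
  have h8 := h6.unique h7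
  rw [Finset.sum_insert (by simp), Finset.sum_insert (by simp), Finset.sum_singleton] at h8
  rw [← inner_self_eq_norm_sq (𝕜 := ℂ), ← inner_self_eq_norm_sq (𝕜 := ℂ), h8]
  simp only [inner_sub_left, inner_sub_right, hv]
  simp
  ring

/-! ### The pointwise nonlinearity -/

/-- The graph of the convex function `x ↦ x^q` lies above its tangents. -/
lemma rpow_tangent {q : ℝ} (hq : 1 < q) {x y : ℝ} (hx : 0 ≤ x) (hy : 0 ≤ y) :
    x ^ q + q * x ^ (q - 1) * (y - x) ≤ y ^ q := by
  rcases hx.eq_or_lt with rfl | hx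
  · rw [Real.zero_rpow (by linarith), Real.zero_rpow (by linarith)]
    simpa using Real.rpow_nonneg hy q
  · have h := one_add_mul_self_le_rpow_one_add (s := y / x - 1)
      (by linarith [div_nonneg hy hx.le]) hq.le
    rw [add_sub_cancel, Real.div_rpow hy hx.le, le_div_iff₀ (Real.rpow_pos_of_pos hx q)] at h
    refine le_of_eq_of_le ?_ h
    rw [Real.rpow_sub_one hx.ne']
    field_simp

/-- The nonlinearity `z ↦ |z|^{p-1} z`. -/
def nl (p : ℝ) (z : ℂ) : ℂ := ((‖z‖ ^ (p - 1) : ℝ) : ℂ) * z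

lemma norm_nl {p : ℝ} (hp : 1 < p) (z : ℂ) : ‖nl p z‖ = ‖z‖ ^ p := by
  rw [nl, norm_mul, Complex.norm_real, Real.norm_of_nonneg (by positivity)]
  rcases eq_or_ne z 0 with rfl | h
  · simp [Real.zero_rpow (by linarith : p ≠ 0)]
  · have := norm_pos_iff.2 h
    rw [← Real.rpow_add_one this.ne']; ring_nf

lemma nl_tangent {p : ℝ} (hp : 1 < p) (z y : ℂ) :
    ‖z‖ ^ (p + 1) + (p + 1) * (inner ℂ (nl p z) (y - z)).re ≤ ‖y‖ ^ (p + 1) := by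
  refine le_trans ?_ (rpow_tangent (q := p + 1) (by linarith) (norm_nonneg z) (norm_nonneg y))
  have h1 : (inner ℂ (nl p z) y).re ≤ ‖z‖ ^ p * ‖y‖ := by
    rw [← norm_nl hp]; exact re_inner_le_norm (𝕜 := ℂ) (nl p z) y
  have h2 : (inner ℂ (nl p z) z).re = ‖z‖ ^ p * ‖z‖ := by
    rcases eq_or_ne z 0 with rfl | h
    · simp
    · have hz := norm_pos_iff.2 h
      have : ‖z‖ ^ p = ‖z‖ ^ (p - 1) * ‖z‖ := by rw [← Real.rpow_add_one hz.ne']; ring_nf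
      rw [nl, ← smul_eq_mul, inner_smul_left, Complex.conj_ofReal, Complex.re_ofReal_mul, this]
      have := inner_self_eq_norm_sq (𝕜 := ℂ) z
      simp only [RCLike.re_to_complex] at this
      rw [this]; ring
  rw [inner_sub_right, Complex.sub_re, h2, add_sub_cancel_right]
  have : 0 < p + 1 := by linarith
  nlinarith

lemma nl_lipschitz_aux {p R : ℝ} (hp : 1 < p) {a b : ℂ} (hab : ‖b‖ ≤ ‖a‖) (ha : ‖a‖ ≤ R) :
    ‖nl p a - nl p b‖ ≤ (p + 1) * R ^ (p - 1) * ‖a - b‖ := by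
  have e : nl p a - nl p b = ((‖b‖ ^ (p - 1) : ℝ) : ℂ) * (a - b)
      + ((‖a‖ ^ (p - 1) - ‖b‖ ^ (p - 1) : ℝ) : ℂ) * a := by
    simp only [nl]; push_cast; ring
  have hmono : ‖b‖ ^ (p - 1) ≤ ‖a‖ ^ (p - 1) :=
    Real.rpow_le_rpow (norm_nonneg _) hab (by linarith)
  have hmono2 : ‖a‖ ^ (p - 1) ≤ R ^ (p - 1) :=
    Real.rpow_le_rpow (norm_nonneg _) ha (by linarith)
  have hb0 : 0 ≤ ‖b‖ ^ (p - 1) := by positivity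
  have hm : ∀ z : ℂ, ‖z‖ ^ (p - 1) * ‖z‖ = ‖z‖ ^ p := fun z => by
    rw [← norm_nl hp, nl, norm_mul, Complex.norm_real, Real.norm_of_nonneg (by positivity)]
  have h1 : ‖nl p a - nl p b‖ ≤ ‖b‖ ^ (p - 1) * ‖a - b‖
      + (‖a‖ ^ (p - 1) - ‖b‖ ^ (p - 1)) * ‖a‖ := by
    rw [e]
    refine (norm_add_le _ _).trans_eq ?_
    rw [norm_mul, norm_mul, Complex.norm_real, Complex.norm_real, Real.norm_of_nonneg hb0,
      Real.norm_of_nonneg (by linarith)]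
  have h2 := rpow_tangent hp (norm_nonneg a) (norm_nonneg b)
  have h3 : ‖a‖ - ‖b‖ ≤ ‖a - b‖ := norm_sub_norm_le a b
  have h4 : (‖a‖ ^ (p - 1) - ‖b‖ ^ (p - 1)) * ‖a‖ ≤ p * ‖a‖ ^ (p - 1) * (‖a‖ - ‖b‖) := by
    have := mul_le_mul_of_nonneg_left hab hb0
    rw [hm b] at this
    have := hm a
    nlinarith
  have h5 : p * ‖a‖ ^ (p - 1) * (‖a‖ - ‖b‖) ≤ p * R ^ (p - 1) * ‖a - b‖ := by
    have : 0 ≤ ‖a‖ - ‖b‖ := by linarith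
    have : 0 ≤ R := (norm_nonneg a).trans ha
    gcongr
  have h6 : ‖b‖ ^ (p - 1) * ‖a - b‖ ≤ R ^ (p - 1) * ‖a - b‖ := by
    gcongr; linarith
  linarith

lemma nl_lipschitz {p R : ℝ} (hp : 1 < p) {a b : ℂ} (ha : ‖a‖ ≤ R) (hb : ‖b‖ ≤ R) :
    ‖nl p a - nl p b‖ ≤ (p + 1) * R ^ (p - 1) * ‖a - b‖ := by
  rcases le_total ‖b‖ ‖a‖ with h | h
  · exact nl_lipschitz_aux hp h ha
  · rw [norm_sub_rev, norm_sub_rev a]; exact nl_lipschitz_aux hp h hb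

/-- Quadratic bound on the Taylor remainder of `|z|^{p+1}`: it is nonnegative by convexity at `z`, and
convexity at `y` bounds it by the variation of the gradient. -/
lemma nl_remainder {p R : ℝ} (hp : 1 < p) {z y : ℂ} (hz : ‖z‖ ≤ R) (hy : ‖y‖ ≤ R) :
    |‖y‖ ^ (p + 1) - ‖z‖ ^ (p + 1) - (p + 1) * (inner ℂ (nl p z) (y - z)).re|
      ≤ (p + 1) ^ 2 * R ^ (p - 1) * ‖y - z‖ ^ 2 := by
  have h1 := nl_tangent hp z y
  have h2 := nl_tangent hp y z
  have h3 : (inner ℂ (nl p y - nl p z) (y - z)).re ≤ (p + 1) * R ^ (p - 1) * ‖y - z‖ ^ 2 := by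
    refine (re_inner_le_norm (𝕜 := ℂ) (nl p y - nl p z) (y - z)).trans ?_
    rw [sq, ← mul_assoc]
    exact mul_le_mul_of_nonneg_right (nl_lipschitz hp hy hz) (norm_nonneg _)
  rw [inner_sub_left, Complex.sub_re] at h3
  have h4 : (inner ℂ (nl p y) (z - y)).re = -(inner ℂ (nl p y) (y - z)).re := by
    rw [← neg_sub y z, inner_neg_right, Complex.neg_re]
  rw [h4] at h2
  have hp1 : 0 < p + 1 := by linarith
  have h5 := mul_le_mul_of_nonneg_left h3 hp1.le
  rw [abs_of_nonneg (by linarith)]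
  linarith

/-! ### The Hilbert space `ℓ²(ℤ^d)` -/

/-- The Hilbert space `ℓ²(ℤ^d)`. -/
abbrev L2 (d : ℕ) := lp (fun _ : Fin d → ℤ => ℂ) 2

lemma memL2_iff {d : ℕ} (f : (Fin d → ℤ) → ℂ) : Memℓp f 2 ↔ Summable (fun m => ‖f m‖ ^ 2) := by
  rw [memℓp_gen_iff (by norm_num)]; simp

lemma norm_sq_L2 {d : ℕ} (f : L2 d) : HasSum (fun m => ‖f m‖ ^ 2) (‖f‖ ^ 2) := by
  have h := lp.hasSum_norm (p := 2) (by norm_num) f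
  simpa using h

lemma w2_zero_eq {d : ℕ} (f : (Fin d → ℤ) → ℂ) :
    w2 0 f = (∑' m, (‖f m‖₊ : ℝ≥0∞) ^ 2) ^ (1 / 2 : ℝ) := by
  simp [w2, lpn]

lemma memL2_of_w2 {d : ℕ} {f : (Fin d → ℤ) → ℂ} (h : w2 0 f < ⊤) : Memℓp f 2 := by
  rw [w2_zero_eq, ENNReal.rpow_lt_top_iff_of_pos (by norm_num)] at h
  rw [memL2_iff]
  have h2 : ∑' m, ((‖f m‖₊ ^ 2 : ℝ≥0) : ℝ≥0∞) ≠ ⊤ := by simpa using h.ne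
  have h3 := ENNReal.tsum_coe_ne_top_iff_summable.1 h2
  have h4 := NNReal.summable_coe.2 h3
  simpa using h4

lemma w2_coe {d : ℕ} (f : L2 d) : w2 0 (f : (Fin d → ℤ) → ℂ) = ‖f‖ₑ := by
  have h := (norm_sq_L2 f)
  have h1 : HasSum (fun m => ‖f m‖₊ ^ 2) (‖f‖₊ ^ 2) := by
    rw [← NNReal.hasSum_coe]; simpa using h
  have h2 := (ENNReal.hasSum_coe.2 h1).tsum_eq
  rw [w2_zero_eq]
  push_cast at h2
  rw [h2, ← ENNReal.rpow_natCast, ← ENNReal.rpow_mul]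
  simp [enorm]

open scoped Classical in
/-- The element of `ℓ²(ℤ^d)` with values `f`, or `0` when `f` is not square-summable. -/
def toL2 {d : ℕ} (f : (Fin d → ℤ) → ℂ) : L2 d := if h : Memℓp f 2 then ⟨f, h⟩ else 0

lemma coe_toL2 {d : ℕ} {f : (Fin d → ℤ) → ℂ} (h : Memℓp f 2) : ⇑(toL2 f) = f := by
  simp [toL2, h]

lemma hasDerivWithinAt_toL2 {d : ℕ} {S : Set ℝ} {f f' : ℝ → (Fin d → ℤ) → ℂ}
    (h0 : ∀ t ∈ S, w2 0 (f t) < ⊤) (h1 : ∀ t ∈ S, w2 0 (f' t) < ⊤) (h : DerivW 0 S f f')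
    {t : ℝ} (ht : t ∈ S) :
    HasDerivWithinAt (fun s => toL2 (f s)) (toL2 (f' t)) S t := by
  rw [hasDerivWithinAt_iff_tendsto_slope, tendsto_iff_edist_tendsto_0]
  refine (h t ht).congr' ?_
  filter_upwards [self_mem_nhdsWithin] with s hs
  rw [edist_eq_enorm_sub, ← w2_coe]
  congr 1
  ext m
  rw [lp.coeFn_sub, slope_def_module, lp.coeFn_smul, Pi.sub_apply, Pi.smul_apply, lp.coeFn_sub,
    Pi.sub_apply, coe_toL2 (memL2_of_w2 (h0 s hs.1)), coe_toL2 (memL2_of_w2 (h0 t ht)),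
    coe_toL2 (memL2_of_w2 (h1 t ht))]

lemma memL2_shift {d : ℕ} (a : Fin d → ℤ) (f : L2 d) : Memℓp (fun m => f (m - a)) 2 :=
  (memL2_iff _).2
    (((Equiv.subRight a).summable_iff (f := fun m => ‖f m‖ ^ 2)).2 (norm_sq_L2 f).summable)

/-- Translation by `a` on `ℓ²(ℤ^d)`: `(τ_a f)(m) = f(m - a)`. -/
def shift {d : ℕ} (a : Fin d → ℤ) : L2 d →ₗᵢ[ℂ] L2 d where
  toFun f := ⟨fun m => f (m - a), memL2_shift a f⟩
  map_add' f g := by ext m; rfl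
  map_smul' c f := by ext m; rfl
  norm_map' f := by
    have h1 := norm_sq_L2 (⟨fun m => f (m - a), memL2_shift a f⟩ : L2 d)
    have h2 := ((Equiv.subRight a).hasSum_iff (f := fun m => ‖f m‖ ^ 2)).2 (norm_sq_L2 f)
    exact (sq_eq_sq₀ (norm_nonneg _) (norm_nonneg _)).1 (h1.unique h2)

@[simp] lemma shift_apply {d : ℕ} (a : Fin d → ℤ) (f : L2 d) (m : Fin d → ℤ) :
    shift a f m = f (m - a) := rfl

lemma shift_shift {d : ℕ} (a b : Fin d → ℤ) (f : L2 d) : shift a (shift b f) = shift (a + b) f := by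
  ext m; simp [sub_sub]

lemma shift_zero {d : ℕ} (f : L2 d) : shift 0 f = f := by
  ext m; simp

lemma inner_shift_shift {d : ℕ} (a b : Fin d → ℤ) (f g : L2 d) :
    inner ℂ (shift a f) (shift b g) = inner ℂ f (shift (b - a) g) := by
  rw [← (shift a).inner_map_map f (shift (b - a) g), shift_shift, add_sub_cancel]

/-! ### The discrete derivatives and the Laplacian on `ℓ²` -/

lemma continuous_eval {d : ℕ} (m : Fin d → ℤ) : Continuous (fun f : L2 d => f m) :=
  LipschitzWith.continuous (K := 1) (LipschitzWith.of_dist_le_mul fun f g => by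
    rw [dist_eq_norm, dist_eq_norm, NNReal.coe_one, one_mul]
    exact lp.norm_apply_le_norm (by norm_num) (f - g) m)

lemma phi_eq {d : ℕ} (j : Fin d) (a : ℤ) : phi d j (Pi.single j a) = -Complex.I * (psi a : ℂ) := by
  have : ∀ i, i ≠ j → (Pi.single j a : Fin d → ℤ) i = 0 := fun i hi => by simp [hi]
  rw [phi, if_pos this, psi]
  push_cast
  rw [Pi.single_eq_same]
  ring

lemma pd_eq {d : ℕ} (j : Fin d) (f : L2 d) (k : Fin d → ℤ) :
    pd j f k = -Complex.I * ∑' a : ℤ, (psi a : ℂ) * f (k - Pi.single j a) := by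
  have h1 : pd j f k = ∑' m, f (k - m) * phi d j m := by
    rw [pd, dconv, ← (Equiv.subLeft k).tsum_eq]
    simp
  have hinj : Function.Injective (fun a : ℤ => (Pi.single j a : Fin d → ℤ)) :=
    Pi.single_injective (M := fun _ : Fin d => ℤ) j
  rw [h1, ← hinj.tsum_eq, ← tsum_mul_left]
  · refine tsum_congr fun a => ?_
    rw [phi_eq]; ring
  · intro m hm
    have : ∀ i, i ≠ j → m i = 0 := by
      by_contra hne
      apply hm
      simp [phi, hne]
    refine ⟨m j, ?_⟩
    ext i
    by_cases hi : i = j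
    · subst hi; simp
    · simp [hi, this i hi]

/-- The discrete derivative `∂ⱼ` and the difference `τ_{eⱼ} - 1` have the same `ℓ²` norm. -/
lemma hasSum_pd_sq {d : ℕ} (j : Fin d) (f : L2 d) :
    HasSum (fun k => ‖pd j f k‖ ^ 2) (‖shift (Pi.single j 1) f - f‖ ^ 2) := by
  obtain ⟨hs, hn⟩ := norm_tsum_psi_smul_sq (fun a : ℤ => shift (Pi.single j a) f)
    (fun c => inner ℂ f (shift (Pi.single j c) f)) (fun a b => by
      rw [inner_shift_shift, Pi.single_sub])
  simp only [Pi.single_zero, shift_zero] at hn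
  rw [← hn]
  convert! norm_sq_L2 (∑' a : ℤ, (psi a : ℂ) • shift (Pi.single j a) f) using 3 with k
  rw [pd_eq, norm_mul, norm_neg, Complex.norm_I, one_mul]
  congr 1
  have h := hs.hasSum.map (⟨⟨fun f : L2 d => f k, rfl⟩, fun _ _ => rfl⟩ : L2 d →+ ℂ)
    (continuous_eval k)
  exact h.tsum_eq

/-- The discrete Laplacian as a map of `ℓ²(ℤ^d)` to itself, written with translations. -/
def lapL2 {d : ℕ} (f : L2 d) : L2 d :=
  ∑ j, (shift (-Pi.single j 1) f + shift (Pi.single j 1) f - (2 : ℂ) • f)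

lemma lapL2_apply {d : ℕ} (f : L2 d) (m : Fin d → ℤ) : lapL2 f m = lap f m := by
  rw [lapL2, lap, lp.coeFn_sum, Finset.sum_apply]
  refine Finset.sum_congr rfl fun j _ => ?_
  rw [lp.coeFn_sub, lp.coeFn_add, lp.coeFn_smul, Pi.sub_apply, Pi.add_apply, Pi.smul_apply,
    shift_apply, shift_apply, sub_neg_eq_add, smul_eq_mul]

/-- Summation by parts. -/
lemma sum_inner_diff {d : ℕ} (f g : L2 d) :
    ∑ j, inner ℂ (shift (Pi.single j 1) f - f) (shift (Pi.single j 1) g - g)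
      = -inner ℂ (lapL2 f) g := by
  rw [lapL2, sum_inner, ← Finset.sum_neg_distrib]
  refine Finset.sum_congr rfl fun j _ => ?_
  have h : inner ℂ (shift (-Pi.single j 1) f) g = inner ℂ f (shift (Pi.single j 1) g) := by
    conv_lhs => rw [← shift_zero g]
    rw [inner_shift_shift]; simp
  simp only [inner_sub_left, inner_sub_right, inner_add_left, inner_smul_left, h,
    LinearIsometry.inner_map_map, map_ofNat]
  ring

/-! ### Differentiating the energy -/

lemma hasDeriv_norm_sq {d : ℕ} {S : Set ℝ} {t : ℝ} {F : ℝ → L2 d} {F' : L2 d}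
    (h : HasDerivWithinAt F F' S t) :
    HasDerivWithinAt (fun s => ‖F s‖ ^ 2) (2 * (inner ℂ (F t) F').re) S t := by
  have h1 := h.inner ℂ h
  have h2 := Complex.reCLM.hasFDerivAt.comp_hasDerivWithinAt t h1
  convert! h2 using 1
  · ext s
    exact (inner_self_eq_norm_sq (𝕜 := ℂ) (F s)).symm
  · have : (inner ℂ F' (F t)).re = (inner ℂ (F t) F').re := by
      rw [← inner_conj_symm, Complex.conj_re]
    simp only [Complex.reCLM_apply, Complex.add_re, this]
    ring

lemma summable_rpow {d : ℕ} {p : ℝ} (hp : 1 < p) (f : L2 d) :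
    Summable (fun m => ‖f m‖ ^ (p + 1)) := by
  refine Summable.of_nonneg_of_le (fun m => by positivity) (fun m => ?_)
    ((norm_sq_L2 f).summable.mul_left (‖f‖ ^ (p - 1)))
  have h0 : ‖f m‖ ^ (p + 1) = ‖f m‖ ^ (p - 1) * ‖f m‖ ^ 2 := by
    rw [← Real.rpow_natCast, ← Real.rpow_add_of_nonneg (norm_nonneg _) (by linarith) (by norm_num)]
    congr 1; push_cast; ring
  rw [h0]
  gcongr
  exact lp.norm_apply_le_norm (by norm_num) f m

lemma potential_remainder {d : ℕ} {p R : ℝ} (hp : 1 < p) {f g G : L2 d}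
    (hG : ∀ m, G m = nl p (f m)) (hf : ‖f‖ ≤ R) (hg : ‖g‖ ≤ R) :
    |∑' m, ‖g m‖ ^ (p + 1) - ∑' m, ‖f m‖ ^ (p + 1) - (p + 1) * (inner ℂ G (g - f)).re|
      ≤ (p + 1) ^ 2 * R ^ (p - 1) * ‖g - f‖ ^ 2 := by
  have h1 : HasSum (fun m => (inner ℂ (nl p (f m)) (g m - f m)).re) (inner ℂ G (g - f)).re := by
    have h := (lp.hasSum_inner (𝕜 := ℂ) G (g - f)).mapL Complex.reCLM
    simp only [lp.coeFn_sub, Pi.sub_apply, hG, Complex.reCLM_apply] at h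
    exact h
  have h2 := ((summable_rpow hp g).hasSum.sub (summable_rpow hp f).hasSum).sub (h1.mul_left (p + 1))
  have h3 := (norm_sq_L2 (g - f)).mul_left ((p + 1) ^ 2 * R ^ (p - 1))
  rw [← Real.norm_eq_abs]
  rw [← h2.tsum_eq]
  refine tsum_of_norm_bounded h3 fun m => ?_
  exact nl_remainder hp ((lp.norm_apply_le_norm (by norm_num) f m).trans hf)
    ((lp.norm_apply_le_norm (by norm_num) g m).trans hg)

lemma potential_hasDeriv {d : ℕ} {p : ℝ} (hp : 1 < p) {S : Set ℝ} {t : ℝ} {F : ℝ → L2 d}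
    {F' G : L2 d} (h : HasDerivWithinAt F F' S t) (hG : ∀ m, G m = nl p (F t m)) :
    HasDerivWithinAt (fun s => ∑' m, ‖F s m‖ ^ (p + 1)) ((p + 1) * (inner ℂ G F').re) S t := by
  set R := ‖F t‖ + 1 with hR
  set C := (p + 1) ^ 2 * R ^ (p - 1) with hC
  -- Split the increment into its linear part and a remainder which is `O(‖F s - F t‖²)`.
  have hlin : HasDerivWithinAt (fun s => (p + 1) * (inner ℂ G (F s - F t)).re)
      ((p + 1) * (inner ℂ G F').re) S t := by
    have h1 := (((innerSL ℂ G).restrictScalars ℝ).hasFDerivAt).comp_hasDerivWithinAt t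
      (h.sub_const (F t))
    have h2 := (Complex.reCLM.hasFDerivAt.comp_hasDerivWithinAt t h1).const_mul (p + 1)
    exact h2
  have hrem : HasDerivWithinAt (fun s => ∑' m, ‖F s m‖ ^ (p + 1) - ∑' m, ‖F t m‖ ^ (p + 1)
      - (p + 1) * (inner ℂ G (F s - F t)).re) 0 S t := by
    rw [hasDerivWithinAt_iff_isLittleO]
    have hbig : (fun s => F s - F t) =O[nhdsWithin t S] (fun s => s - t) := h.hasFDerivWithinAt.isBigO_sub
    have hcont : Tendsto (fun s => F s - F t) (nhdsWithin t S) (nhds 0) := by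
      have := h.continuousWithinAt.tendsto.sub_const (F t)
      simpa using this
    have hsmall : (fun s => ‖F s - F t‖ ^ 2) =o[nhdsWithin t S] (fun s => s - t) := by
      have h1 : (fun s => ‖F s - F t‖) =o[nhdsWithin t S] (fun _ => (1 : ℝ)) :=
        (Asymptotics.isLittleO_one_iff ℝ).2 (by simpa using hcont.norm)
      have := h1.mul_isBigO hbig.norm_left
      simpa [sq] using this
    refine Asymptotics.IsBigO.trans_isLittleO ?_ hsmall
    refine Asymptotics.IsBigO.of_bound C ?_
    have hev : ∀ᶠ s in nhdsWithin t S, ‖F s - F t‖ < 1 := by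
      have := hcont.norm
      rw [norm_zero] at this
      exact this.eventually (gt_mem_nhds one_pos)
    filter_upwards [hev] with s hs
    have hFs : ‖F s‖ ≤ R := by
      have := norm_le_norm_add_norm_sub' (F s) (F t)
      linarith
    have := potential_remainder hp hG (by linarith : ‖F t‖ ≤ R) hFs
    simpa [Real.norm_eq_abs] using this
  have := (hrem.add hlin).add_const (∑' m, ‖F t m‖ ^ (p + 1))
  convert! this using 1
  · ext s; simp
  · simp

/-- energy conservation for the discrete semilinear wave equation
`∂ₜ²u - Δu = μ|u|^{p-1}u`, `μ = ±1`:
`E(t) = (1/2)Σ_k(|∂ₜu|² + Σⱼ|∂ⱼu|² - 2μ|u|^{p+1}/(p+1))` is constant on `[0,T]`. -/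
theorem stmt8 (d : ℕ) (hd : 0 < d) (p : ℝ) (hp : 1 < p) (μ : ℝ) (hμ : μ = 1 ∨ μ = -1)
    (T : ℝ) (hT : 0 < T) (u u1 u2 : ℝ → (Fin d → ℤ) → ℂ)
    (hu : IsC2 0 (Set.Icc 0 T) u u1 u2)
    (heq : ∀ t ∈ Set.Icc (0 : ℝ) T, ∀ x,
      u2 t x - lap (u t) x = (μ : ℂ) * ((‖u t x‖ ^ (p - 1) : ℝ) : ℂ) * u t x) :
    ∀ t ∈ Set.Icc (0 : ℝ) T,
      (1 / 2 : ℝ) *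
          ∑' m, (‖u1 t m‖ ^ 2 + ∑ j, ‖pd j (u t) m‖ ^ 2 -
            2 * μ * ‖u t m‖ ^ (p + 1) / (p + 1)) =
        (1 / 2 : ℝ) *
          ∑' m, (‖u1 0 m‖ ^ 2 + ∑ j, ‖pd j (u 0) m‖ ^ 2 -
            2 * μ * ‖u 0 m‖ ^ (p + 1) / (p + 1)) := by
  set S := Set.Icc (0 : ℝ) T with hS
  have hc0 : ∀ t ∈ S, ⇑(toL2 (u t)) = u t := fun t ht => coe_toL2 (memL2_of_w2 (hu.mem0 t ht))
  have hc1 : ∀ t ∈ S, ⇑(toL2 (u1 t)) = u1 t := fun t ht => coe_toL2 (memL2_of_w2 (hu.mem1 t ht))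
  have hc2 : ∀ t ∈ S, ⇑(toL2 (u2 t)) = u2 t := fun t ht => coe_toL2 (memL2_of_w2 (hu.mem2 t ht))
  -- Twice the energy, in terms of norms of `ℓ²(ℤ^d)`.
  set E : ℝ → ℝ := fun t => ‖toL2 (u1 t)‖ ^ 2
    + ∑ j, ‖shift (Pi.single j 1) (toL2 (u t)) - toL2 (u t)‖ ^ 2
    - 2 * μ / (p + 1) * ∑' m, ‖toL2 (u t) m‖ ^ (p + 1) with hE
  have hsum : ∀ t ∈ S, ∑' m, (‖u1 t m‖ ^ 2 + ∑ j, ‖pd j (u t) m‖ ^ 2 -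
      2 * μ * ‖u t m‖ ^ (p + 1) / (p + 1)) = E t := by
    intro t ht
    have h1 := norm_sq_L2 (toL2 (u1 t))
    have h2 := hasSum_sum (s := Finset.univ) fun j _ => hasSum_pd_sq j (toL2 (u t))
    have h3 := (summable_rpow hp (toL2 (u t))).hasSum.mul_left (2 * μ / (p + 1))
    have h4 := ((h1.add h2).sub h3).tsum_eq
    rw [hE]
    simp only [← h4]
    refine tsum_congr fun m => ?_
    rw [hc0 t ht, hc1 t ht]
    ring
  have hderiv : ∀ t ∈ S, HasDerivWithinAt E 0 S t := by
    intro t ht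
    have d0 := hasDerivWithinAt_toL2 hu.mem0 hu.mem1 hu.hder1 ht
    have d1 := hasDerivWithinAt_toL2 hu.mem1 hu.mem2 hu.hder2 ht
    -- The equation itself shows that `|u|^{p-1}u` is in `ℓ²`, since `μ² = 1`.
    set G : L2 d := (μ : ℂ) • (toL2 (u2 t) - lapL2 (toL2 (u t))) with hGdef
    have hμμ : (μ : ℂ) * μ = 1 := by rcases hμ with rfl | rfl <;> simp
    have hG : ∀ m, G m = nl p (toL2 (u t) m) := by
      intro m
      rw [hGdef, lp.coeFn_smul, Pi.smul_apply, lp.coeFn_sub, Pi.sub_apply, lapL2_apply,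
        hc0 t ht, hc2 t ht, heq t ht m, smul_eq_mul, nl, ← mul_assoc, ← mul_assoc, hμμ, one_mul]
    have e1 := hasDeriv_norm_sq d1
    have e2 : HasDerivWithinAt
        (fun s => ∑ j, ‖shift (Pi.single j 1) (toL2 (u s)) - toL2 (u s)‖ ^ 2)
        (∑ j, 2 * (inner ℂ (shift (Pi.single j 1) (toL2 (u t)) - toL2 (u t))
          (shift (Pi.single j 1) (toL2 (u1 t)) - toL2 (u1 t))).re) S t := by
      refine HasDerivWithinAt.fun_sum fun j _ => hasDeriv_norm_sq ?_
      exact ((((shift (Pi.single j 1)).toContinuousLinearMap.restrictScalars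
        ℝ).hasFDerivAt).comp_hasDerivWithinAt t d0).sub d0
    have e3 := (potential_hasDeriv hp d0 hG).const_mul (2 * μ / (p + 1))
    refine ((e1.add e2).sub e3).congr_deriv ?_
    have hlap := congrArg Complex.re (sum_inner_diff (toL2 (u t)) (toL2 (u1 t)))
    rw [Complex.re_sum, Complex.neg_re] at hlap
    have hp1 : p + 1 ≠ 0 := by linarith
    have hμG : μ * (inner ℂ G (toL2 (u1 t))).re
        = (inner ℂ (toL2 (u2 t)) (toL2 (u1 t))).re
          - (inner ℂ (lapL2 (toL2 (u t))) (toL2 (u1 t))).re := by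
      rw [← Complex.re_ofReal_mul, hGdef, inner_smul_left, Complex.conj_ofReal, ← mul_assoc, hμμ,
        one_mul, inner_sub_left, Complex.sub_re]
    have hsymm : (inner ℂ (toL2 (u1 t)) (toL2 (u2 t))).re
        = (inner ℂ (toL2 (u2 t)) (toL2 (u1 t))).re := by
      rw [← inner_conj_symm, Complex.conj_re]
    rw [← Finset.mul_sum, hlap, hsymm]
    have : 2 * μ / (p + 1) * ((p + 1) * (inner ℂ G (toL2 (u1 t))).re)
        = 2 * (μ * (inner ℂ G (toL2 (u1 t))).re) := by field_simp
    rw [this, hμG]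
    ring
  have hconst := constant_of_derivWithin_zero (f := E) (a := 0) (b := T)
    (fun t ht => (hderiv t ht).differentiableWithinAt)
    (fun t ht => (hderiv t (Set.Ico_subset_Icc_self ht)).derivWithin
      (uniqueDiffOn_Icc hT t (Set.Ico_subset_Icc_self ht)))
  intro t ht
  rw [hsum t ht, hsum 0 ⟨le_rfl, hT.le⟩, hconst t ht]
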